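/- Let G be the free group on generators a_1,…,a_n, let H be a free group, and let φ, ψ : G → H be homomorphisms such that φ has remnant and |Rem_φ a_i| > |ψ(a_i)| for every generator a_i. Set l = min_i (|Rem_φ a_i| − |ψ(a_i)|) > 0. Then for all u, v ∈ H and z ∈ G, if u = φ(z)·v·ψ(z)⁻¹ then |z| ≤ (|u| + |v|)/l. In particular every pair (u,v) has bounded solution length with solution bound at most (|u| + |v|)/l. -/

import Mathlib

/-- Half the total cancellation in the product `x * y` of elements of a free group:
`(|x| + |y| - |x*y|) / 2`. -/
def cancelLen {β : Type} [DecidableEq β] (x y : FreeGroup β) : ℕ :=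
  (FreeGroup.norm x + FreeGroup.norm y - FreeGroup.norm (x * y)) / 2

/-- `x` or `x⁻¹`, according to the sign `b` (`true` = exponent `1`, `false` = exponent `-1`). -/
def pmPow {β : Type} [DecidableEq β] (b : Bool) (x : FreeGroup β) : FreeGroup β :=
  if b then x else x⁻¹

/-- The left cancellation `L_i` of the `i`-th entry of the tuple `t`: the maximum of
`(|h_j^α| + |h_i| - |h_j^α * h_i|)/2` over pairs `(j, α)` with `(j, α) ≠ (i, -1)`. -/
def leftCancel {β : Type} [DecidableEq β] {N : ℕ} (t : Fin N → FreeGroup β) (i : Fin N) : ℕ :=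
  Finset.univ.sup fun p : Fin N × Bool =>
    if p.1 = i ∧ p.2 = false then 0 else cancelLen (pmPow p.2 (t p.1)) (t i)

/-- The right cancellation `R_i` of the `i`-th entry of the tuple `t`: the maximum of
`(|h_i| + |h_k^β| - |h_i * h_k^β|)/2` over pairs `(k, β)` with `(k, β) ≠ (i, -1)`. -/
def rightCancel {β : Type} [DecidableEq β] {N : ℕ} (t : Fin N → FreeGroup β) (i : Fin N) : ℕ :=
  Finset.univ.sup fun p : Fin N × Bool =>
    if p.1 = i ∧ p.2 = false then 0 else cancelLen (t i) (pmPow p.2 (t p.1))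

/-- The remnant length `|Rem_t h_i| = |h_i| - L_i - R_i` of the `i`-th entry of `t`. -/
def remLen {β : Type} [DecidableEq β] {N : ℕ} (t : Fin N → FreeGroup β) (i : Fin N) : ℕ :=
  FreeGroup.norm (t i) - leftCancel t i - rightCancel t i

/-- A tuple has remnant if `|h_i| - L_i - R_i ≥ 1` for all `i`. -/
def HasRemnant {β : Type} [DecidableEq β] {N : ℕ} (t : Fin N → FreeGroup β) : Prop :=
  ∀ i, 1 ≤ remLen t i

/-!
Cancellation is governed by common prefixes: `cancelLen x y` is the length of the longest common
prefix of `x⁻¹` and `y`, so it obeys the ultrametric inequality for common prefixes. Consequently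
right multiplication of `y` by `z` cannot increase the cancellation of `x` against `y`, as long as
the cancellations of `y` with `x` and with `z` together do not use up all of `y`. Remnant
guarantees this for the images of any three consecutive letters of a reduced word, so cancellation
in the image of a reduced word takes place only between images of adjacent letters. Every letter
`aᵢ^±1` of `z` therefore contributes at least `|Rem_φ aᵢ|` to `|φ(z)|`, whereas it contributes at
most `|ψ(aᵢ)|` to `|ψ(z)|`. Hence `l |z| + |ψ(z)| ≤ |φ(z)| = |u ψ(z) v⁻¹| ≤ |u| + |ψ(z)| + |v|`.
-/

section CommonPrefix

variable {α : Type*} [DecidableEq α]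

/-- The length of the longest common prefix of two lists. -/
def commonPrefixLength : List α → List α → ℕ
  | x :: X, y :: Y => if x = y then commonPrefixLength X Y + 1 else 0
  | _, _ => 0

theorem min_commonPrefixLength_le : ∀ X Y Z : List α,
    min (commonPrefixLength X Y) (commonPrefixLength Y Z) ≤ commonPrefixLength X Z
  | [], _, _ => by simp [commonPrefixLength]
  | _ :: _, [], _ => by simp [commonPrefixLength]
  | _ :: _, _ :: _, [] => by simp [commonPrefixLength]
  | x :: X, y :: Y, z :: Z => by
    have ih := min_commonPrefixLength_le X Y Z
    grind [commonPrefixLength]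

end CommonPrefix

section ReducedWords

variable {α : Type*} {X Y : List (α × Bool)}

theorem isReduced_invRev (hX : FreeGroup.IsReduced X) :
    FreeGroup.IsReduced (FreeGroup.invRev X) := by
  rw [FreeGroup.IsReduced, FreeGroup.invRev, List.isChain_reverse, List.isChain_map]
  exact hX.imp fun a b hab h => by simp [hab h.symm]

theorem isReduced_invRev_append (hX : FreeGroup.IsReduced X) (hY : FreeGroup.IsReduced Y)
    (hXY : ∀ x ∈ X.head?, ∀ y ∈ Y.head?, x ≠ y) :
    FreeGroup.IsReduced (FreeGroup.invRev X ++ Y) := by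
  refine List.IsChain.append (isReduced_invRev hX) hY fun x' hx' y hy hfst => ?_
  obtain ⟨x, hx, rfl⟩ : ∃ x ∈ X.head?, (x.1, !x.2) = x' := by
    simpa [FreeGroup.invRev] using hx'
  have hne := hXY x hx y hy
  grind

variable [DecidableEq α]

theorem norm_mk_of_isReduced (hX : FreeGroup.IsReduced X) :
    FreeGroup.norm (FreeGroup.mk X) = X.length := by
  rw [FreeGroup.norm, FreeGroup.toWord_mk, hX.reduce_eq]

theorem norm_inv_mk_mul_mk_add_two_mul_commonPrefixLength (hX : FreeGroup.IsReduced X)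
    (hY : FreeGroup.IsReduced Y) :
    FreeGroup.norm ((FreeGroup.mk X)⁻¹ * FreeGroup.mk Y) + 2 * commonPrefixLength X Y =
      X.length + Y.length := by
  have norm_of_head_ne {X Y : List (α × Bool)} (hX : FreeGroup.IsReduced X)
      (hY : FreeGroup.IsReduced Y) (hXY : ∀ x ∈ X.head?, ∀ y ∈ Y.head?, x ≠ y) :
      FreeGroup.norm ((FreeGroup.mk X)⁻¹ * FreeGroup.mk Y) = X.length + Y.length := by
    rw [FreeGroup.inv_mk, FreeGroup.mul_mk,
      norm_mk_of_isReduced (isReduced_invRev_append hX hY hXY), List.length_append,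
      FreeGroup.invRev_length]
  fun_induction commonPrefixLength X Y with
  | case1 X y Y ih =>
    have cancel_head : (FreeGroup.mk (y :: X))⁻¹ * FreeGroup.mk (y :: Y) =
        (FreeGroup.mk X)⁻¹ * FreeGroup.mk Y := by
      rw [← List.singleton_append, ← List.singleton_append (l := Y), ← FreeGroup.mul_mk,
        ← FreeGroup.mul_mk]
      group
    have := ih (List.IsChain.of_cons hX) (List.IsChain.of_cons hY)
    rw [cancel_head, List.length_cons, List.length_cons]
    omega
  | case2 x X y Y hxy => exact norm_of_head_ne hX hY (by simpa using hxy)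
  | case3 X Y hnil =>
    refine norm_of_head_ne hX hY fun x hx y hy => ?_
    obtain ⟨X', rfl⟩ := List.head?_eq_some_iff.1 hx
    obtain ⟨Y', rfl⟩ := List.head?_eq_some_iff.1 hy
    exact (hnil x X' y Y' rfl rfl).elim

end ReducedWords

section Cancellation

variable {β : Type} [DecidableEq β] (x y z : FreeGroup β)

theorem norm_mul_add_two_mul_commonPrefixLength :
    FreeGroup.norm (x * y) + 2 * commonPrefixLength x⁻¹.toWord y.toWord =
      FreeGroup.norm x + FreeGroup.norm y := by
  have h := norm_inv_mk_mul_mk_add_two_mul_commonPrefixLength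
    (FreeGroup.isReduced_toWord (x := x⁻¹)) (FreeGroup.isReduced_toWord (x := y))
  rwa [FreeGroup.mk_toWord, FreeGroup.mk_toWord, inv_inv, ← FreeGroup.norm, ← FreeGroup.norm,
    FreeGroup.norm_inv_eq] at h

theorem cancelLen_eq_commonPrefixLength :
    cancelLen x y = commonPrefixLength x⁻¹.toWord y.toWord := by
  rw [cancelLen, ← norm_mul_add_two_mul_commonPrefixLength]
  omega

theorem norm_mul_add_two_mul_cancelLen :
    FreeGroup.norm (x * y) + 2 * cancelLen x y = FreeGroup.norm x + FreeGroup.norm y := by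
  rw [cancelLen_eq_commonPrefixLength, norm_mul_add_two_mul_commonPrefixLength]

theorem min_cancelLen_le : min (cancelLen x y) (cancelLen y⁻¹ z) ≤ cancelLen x z := by
  simpa only [cancelLen_eq_commonPrefixLength, inv_inv] using min_commonPrefixLength_le _ _ _

theorem cancelLen_inv_inv : cancelLen y⁻¹ x⁻¹ = cancelLen x y := by
  simp only [cancelLen, ← mul_inv_rev, FreeGroup.norm_inv_eq, add_comm]

theorem cancelLen_inv_mul_add_cancelLen :
    cancelLen (x * y)⁻¹ x + cancelLen x y = FreeGroup.norm x := by
  have hinv := norm_mul_add_two_mul_cancelLen (x * y)⁻¹ x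
  have hmul := norm_mul_add_two_mul_cancelLen x y
  rw [mul_inv_rev, inv_mul_cancel_right, ← mul_inv_rev, FreeGroup.norm_inv_eq,
    FreeGroup.norm_inv_eq] at hinv
  omega

variable {x y z}

theorem cancelLen_mul_right_le (h : cancelLen x y + cancelLen y z < FreeGroup.norm y) :
    cancelLen x (y * z) ≤ cancelLen x y := by
  have hmin := min_cancelLen_le x (y * z) y
  have hadd := cancelLen_inv_mul_add_cancelLen y z
  omega

end Cancellation

section Letters

variable {β : Type} [DecidableEq β] {ι : Type*}

/-- The value of the signed letter `aᵢ^±1`, encoded as in `FreeGroup.mk`, under `aᵢ ↦ t i`. -/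
def letterValue (t : ι → FreeGroup β) (s : ι × Bool) : FreeGroup β :=
  pmPow s.2 (t s.1)

theorem letterValue_not (t : ι → FreeGroup β) (s : ι × Bool) :
    letterValue t (s.1, !s.2) = (letterValue t s)⁻¹ := by
  obtain ⟨i, _ | _⟩ := s <;> simp [letterValue, pmPow]

theorem norm_letterValue (t : ι → FreeGroup β) (s : ι × Bool) :
    FreeGroup.norm (letterValue t s) = FreeGroup.norm (t s.1) := by
  obtain ⟨i, _ | _⟩ := s <;> simp [letterValue, pmPow]

theorem lift_mk_eq_prod_letterValue (t : ι → FreeGroup β) (w : List (ι × Bool)) :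
    FreeGroup.lift t (FreeGroup.mk w) = (w.map (letterValue t)).prod := by
  simp only [FreeGroup.lift_mk, Bool.cond_eq_ite]
  rfl

theorem lift_mk_cons (t : ι → FreeGroup β) (s : ι × Bool) (w : List (ι × Bool)) :
    FreeGroup.lift t (FreeGroup.mk (s :: w)) =
      letterValue t s * FreeGroup.lift t (FreeGroup.mk w) := by
  simp only [lift_mk_eq_prod_letterValue, List.map_cons, List.prod_cons]

theorem lift_mk_singleton (t : ι → FreeGroup β) (s : ι × Bool) :
    FreeGroup.lift t (FreeGroup.mk [s]) = letterValue t s := by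
  rw [lift_mk_eq_prod_letterValue, List.map_singleton, List.prod_singleton]

theorem norm_lift_le_sum [DecidableEq ι] (t : ι → FreeGroup β) (z : FreeGroup ι) :
    FreeGroup.norm (FreeGroup.lift t z) ≤
      (z.toWord.map fun s => FreeGroup.norm (t s.1)).sum := by
  have h := (z.toWord.map (letterValue t)).apply_prod_le_sum_map FreeGroup.norm
    FreeGroup.norm_one.le FreeGroup.norm_mul_le
  simpa only [← lift_mk_eq_prod_letterValue, FreeGroup.mk_toWord, List.map_map,
    Function.comp_def, norm_letterValue] using h

end Letters

section Remnant

variable {β : Type} [DecidableEq β] {N : ℕ} {t : Fin N → FreeGroup β}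

/-- The part of the value of the signed letter `s` that remnant reserves for cancellation at its
left end. The part reserved at the right end is that of the inverse letter `(s.1, !s.2)`. -/
def letterCancel (t : Fin N → FreeGroup β) (s : Fin N × Bool) : ℕ :=
  if s.2 then leftCancel t s.1 else rightCancel t s.1

theorem cancelLen_le_leftCancel {s : Fin N × Bool} {i : Fin N} (h : s.1 = i → s.2 = true) :
    cancelLen (letterValue t s) (t i) ≤ leftCancel t i := by
  have hs : ¬(s.1 = i ∧ s.2 = false) := by grind
  exact (if_neg hs).ge.trans (Finset.le_sup (f := fun p : Fin N × Bool =>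
    if p.1 = i ∧ p.2 = false then 0 else cancelLen (letterValue t p) (t i)) (Finset.mem_univ s))

theorem cancelLen_le_rightCancel {s : Fin N × Bool} {i : Fin N} (h : s.1 = i → s.2 = true) :
    cancelLen (t i) (letterValue t s) ≤ rightCancel t i := by
  have hs : ¬(s.1 = i ∧ s.2 = false) := by grind
  exact (if_neg hs).ge.trans (Finset.le_sup (f := fun p : Fin N × Bool =>
    if p.1 = i ∧ p.2 = false then 0 else cancelLen (t i) (letterValue t p)) (Finset.mem_univ s))

theorem cancelLen_le_letterCancel_right {s r : Fin N × Bool} (hsr : s.1 = r.1 → s.2 = r.2) :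
    cancelLen (letterValue t s) (letterValue t r) ≤ letterCancel t r := by
  obtain ⟨i, _ | _⟩ := r
  · have h := cancelLen_le_rightCancel (t := t) (s := (s.1, !s.2)) (i := i) (by simpa using hsr)
    rwa [letterValue_not, ← cancelLen_inv_inv, inv_inv] at h
  · exact cancelLen_le_leftCancel hsr

theorem cancelLen_le_letterCancel_left {s r : Fin N × Bool} (hsr : s.1 = r.1 → s.2 = r.2) :
    cancelLen (letterValue t s) (letterValue t r) ≤ letterCancel t (s.1, !s.2) := by
  have h := cancelLen_le_letterCancel_right (t := t) (s := (r.1, !r.2)) (r := (s.1, !s.2))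
    (fun h => by rw [hsr h.symm])
  rwa [letterValue_not, letterValue_not, cancelLen_inv_inv] at h

theorem HasRemnant.norm_letterValue_eq (ht : HasRemnant t) (s : Fin N × Bool) :
    FreeGroup.norm (letterValue t s) =
      letterCancel t s + remLen t s.1 + letterCancel t (s.1, !s.2) := by
  have hpos := ht s.1
  rw [norm_letterValue]
  obtain ⟨i, _ | _⟩ := s <;> simp only [letterCancel, remLen] at * <;> grind

theorem HasRemnant.cancelLen_lift_mk_cons_le (ht : HasRemnant t) {s r : Fin N × Bool}
    {w : List (Fin N × Bool)} (hw : FreeGroup.IsReduced (s :: r :: w)) :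
    cancelLen (letterValue t s) (FreeGroup.lift t (FreeGroup.mk (r :: w))) ≤
      cancelLen (letterValue t s) (letterValue t r) := by
  induction w generalizing s r with
  | nil => rw [lift_mk_singleton]
  | cons q w ih =>
    obtain ⟨hsr, hrqw⟩ := FreeGroup.isReduced_cons_cons.1 hw
    have hleft := cancelLen_le_letterCancel_right (t := t) hsr
    have hright := (ih hrqw).trans
      (cancelLen_le_letterCancel_left (FreeGroup.isReduced_cons_cons.1 hrqw).1)
    have hrem := ht r.1
    have hnorm := ht.norm_letterValue_eq r
    rw [lift_mk_cons]
    exact cancelLen_mul_right_le (by omega)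

theorem HasRemnant.letterCancel_add_sum_le_norm_lift_mk_cons (ht : HasRemnant t)
    {s : Fin N × Bool} {w : List (Fin N × Bool)} (hw : FreeGroup.IsReduced (s :: w)) :
    letterCancel t s + ((s :: w).map fun r => remLen t r.1).sum ≤
      FreeGroup.norm (FreeGroup.lift t (FreeGroup.mk (s :: w))) := by
  have hs := ht.norm_letterValue_eq s
  induction w generalizing s with
  | nil =>
    rw [lift_mk_singleton, List.map_singleton, List.sum_singleton]
    omega
  | cons r w ih =>
    obtain ⟨hsr, hrw⟩ := FreeGroup.isReduced_cons_cons.1 hw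
    have htail := ih hrw (ht.norm_letterValue_eq r)
    have hlocal := ht.cancelLen_lift_mk_cons_le hw
    have hleft := cancelLen_le_letterCancel_left (t := t) hsr
    have hright := cancelLen_le_letterCancel_right (t := t) hsr
    have hmul := norm_mul_add_two_mul_cancelLen (letterValue t s)
      (FreeGroup.lift t (FreeGroup.mk (r :: w)))
    rw [lift_mk_cons, List.map_cons, List.sum_cons]
    omega

theorem HasRemnant.sum_remLen_le_norm_lift (ht : HasRemnant t) (z : FreeGroup (Fin N)) :
    (z.toWord.map fun s => remLen t s.1).sum ≤ FreeGroup.norm (FreeGroup.lift t z) := by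
  have hz := FreeGroup.isReduced_toWord (x := z)
  conv_rhs => rw [← FreeGroup.mk_toWord (x := z)]
  cases hw : z.toWord with
  | nil => simp
  | cons s w =>
    exact le_of_add_le_right (ht.letterCancel_add_sum_le_norm_lift_mk_cons (hw ▸ hz))

theorem HasRemnant.mul_norm_add_norm_lift_le (ht : HasRemnant t) {f : Fin N → FreeGroup β}
    {l : ℕ} (hl : ∀ i, l + FreeGroup.norm (f i) ≤ remLen t i) (z : FreeGroup (Fin N)) :
    l * FreeGroup.norm z + FreeGroup.norm (FreeGroup.lift f z) ≤
      FreeGroup.norm (FreeGroup.lift t z) :=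
  calc
    l * FreeGroup.norm z + FreeGroup.norm (FreeGroup.lift f z)
      ≤ l * FreeGroup.norm z + (z.toWord.map fun s => FreeGroup.norm (f s.1)).sum := by
        gcongr
        exact norm_lift_le_sum f z
    _ = (z.toWord.map fun s => l + FreeGroup.norm (f s.1)).sum := by
        simp [List.sum_map_add, FreeGroup.norm, mul_comm]
    _ ≤ (z.toWord.map fun s => remLen t s.1).sum := List.sum_le_sum fun s _ => hl s.1
    _ ≤ FreeGroup.norm (FreeGroup.lift t z) := ht.sum_remLen_le_norm_lift z

end Remnant

/-- If `φ ψ : G → H` are homomorphisms of free groups with `φ` having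
remnant and `|Rem_φ a_i| > |ψ(a_i)|` for every generator, then with
`l = min_i (|Rem_φ a_i| - |ψ(a_i)|)`, any solution `z` of `u = φ(z) * v * ψ(z)⁻¹`
satisfies `|z| ≤ (|u| + |v|) / l`: every pair `(u, v)` has bounded solution length. -/
theorem bounded_solution_length {n : ℕ} {β : Type} [DecidableEq β] (hn : 0 < n)
    (φ ψ : FreeGroup (Fin n) →* FreeGroup β)
    (hrem : HasRemnant fun i : Fin n => φ (FreeGroup.of i))
    (hlt : ∀ i : Fin n, FreeGroup.norm (ψ (FreeGroup.of i)) <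
      remLen (fun j : Fin n => φ (FreeGroup.of j)) i)
    (l : ℕ)
    (hl : l = Finset.univ.inf'
      (⟨⟨0, hn⟩, Finset.mem_univ _⟩ : (Finset.univ : Finset (Fin n)).Nonempty)
      (fun i => remLen (fun j : Fin n => φ (FreeGroup.of j)) i -
        FreeGroup.norm (ψ (FreeGroup.of i))))
    (u v : FreeGroup β) (z : FreeGroup (Fin n))
    (hz : u = φ z * v * (ψ z)⁻¹) :
    (FreeGroup.norm z : ℝ) ≤ (FreeGroup.norm u + FreeGroup.norm v) / l := by
  have hle (i : Fin n) : l + FreeGroup.norm (ψ (FreeGroup.of i)) ≤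
      remLen (fun j => φ (FreeGroup.of j)) i := by
    have hmin : l ≤ _ := hl ▸ Finset.inf'_le _ (Finset.mem_univ i)
    have := hlt i
    omega
  have hpos : 0 < l := by
    rw [hl]
    exact (Finset.lt_inf'_iff _).2 fun i _ => Nat.sub_pos_of_lt (hlt i)
  have hgap : l * FreeGroup.norm z + FreeGroup.norm (ψ z) ≤ FreeGroup.norm (φ z) := by
    have h := hrem.mul_norm_add_norm_lift_le hle z
    rwa [show FreeGroup.lift (fun i => φ (FreeGroup.of i)) = φ from
        FreeGroup.lift.apply_symm_apply φ,
      show FreeGroup.lift (fun i => ψ (FreeGroup.of i)) = ψ from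
        FreeGroup.lift.apply_symm_apply ψ] at h
  have hφz : FreeGroup.norm (φ z) ≤
      FreeGroup.norm u + FreeGroup.norm (ψ z) + FreeGroup.norm v := by
    have hφ : φ z = u * ψ z * v⁻¹ := by rw [hz]; group
    rw [hφ, ← FreeGroup.norm_inv_eq (x := v)]
    exact (FreeGroup.norm_mul_le _ _).trans (by gcongr; exact FreeGroup.norm_mul_le _ _)
  have hbound : FreeGroup.norm z * l ≤ FreeGroup.norm u + FreeGroup.norm v := by
    rw [mul_comm]
    omega
  rw [le_div_iff₀ (by exact_mod_cast hpos)]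
  exact_mod_cast hbound
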